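/- arXiv:2504.14352 — 2 statements merged into one kernel-verified Lean document; each statement's English description precedes it below -/
import Mathlib

section
/- Let G be a finite connected simple graph on n vertices with connectivity k(G) satisfying k(G) ≥ (n−1)/2. Then for any two adjacent vertices x and y with d_x ≥ d_y, we have κ_LLY(x,y) ≥ (2·k(G) − n + 2)/d_x. -/
/-!
Write `n = |V|`, `k = k(G)`, `C = N(x) ∩ N(y)`, `A = N(x) \ N[y]` and `B = N(y) \ N[x]`.

The limit defining `κ_LLY(x,y)` exists, because the quotient is monotone in `p`
(`monotoneOn_curvature`) and bounded above (`curvature_le_two`). Hence it suffices to bound the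
Wasserstein distance from above, by exhibiting a transport plan, for `p` close to `1`.

All degrees are at least `k ≥ (n - 1) / 2`, so `G` has diameter at most two (`dist_le_two`), and
any mass moves at cost at most `2` per unit. A plan is therefore as good as the mass it leaves in
place or moves along edges (`Wdist_le_of_partial_plan`). Mass `(1 - p) / d_x` stays at `y` and at
each vertex of `C`, mass `(1 - p) / d_y` stays at `x`, the rest of the mass of `x` moves to `y`,
and mass `(1 - p) / d_x` moves along each edge of a matching between `A` and `B`
(`Wdist_muP_le`).

Connectivity makes the matching large: for nonempty `S ⊆ A`, the vertex `y` is outside the closed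
neighbourhood of `S`, so the boundary of `S` is a cut and has at least `k` elements. It avoids
`S` and `y`, so at least `|S| + k + 1 + |B| - n` of its elements lie in `B`. Hall's theorem with
deficiency gives a matching with at least `|A| + |B| + k + 1 - n` edges
(`exists_matching_private_neighbors`). Together with `k ≤ d_y = |B| + |C| + 1` this is exactly
what the claimed bound needs.
-/

open Filter Finset

attribute [local instance] Classical.propDecidable

variable {V : Type*}

/-- The measure `μ_x^p`. -/
noncomputable def muP [Fintype V] (G : SimpleGraph V) (p : ℝ) (x : V) : V → ℝ :=
  fun z => if z = x then p else if G.Adj x z then (1 - p) / (G.degree x) else 0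

/-- A transport plan between two measures. -/
def IsTransportPlan [Fintype V] (μ₁ μ₂ : V → ℝ) (π : V → V → ℝ) : Prop :=
  (∀ u v, 0 ≤ π u v ∧ π u v ≤ 1) ∧
  (∀ u, ∑ v, π u v = μ₁ u) ∧ (∀ v, ∑ u, π u v = μ₂ v)

/-- The cost of a transport plan. -/
noncomputable def planCost [Fintype V] (G : SimpleGraph V) (π : V → V → ℝ) : ℝ :=
  ∑ u, ∑ v, (G.dist u v : ℝ) * π u v

/-- The Wasserstein distance between two measures on a graph. -/
noncomputable def Wdist [Fintype V] (G : SimpleGraph V) (μ₁ μ₂ : V → ℝ) : ℝ :=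
  sInf {c : ℝ | ∃ π, IsTransportPlan μ₁ μ₂ π ∧ c = planCost G π}

/-- The Lin-Lu-Yau curvature of a pair of vertices. -/
noncomputable def kappaLLY [Fintype V] (G : SimpleGraph V) (x y : V) : ℝ :=
  limUnder (nhdsWithin 1 (Set.Iio (1 : ℝ)))
    (fun p => (1 - Wdist G (muP G p x) (muP G p y) / (G.dist x y)) / (1 - p))

/-- `κ_LLY^{(i)}(G)`: infimum of the curvature over pairs at distance `i`. -/
noncomputable def kappaLLYscale [Fintype V] (G : SimpleGraph V) (i : ℕ) : ℝ :=
  sInf {k : ℝ | ∃ x y : V, G.dist x y = i ∧ k = kappaLLY G x y}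

/-- `κ_LLY(G)`: infimum of the curvature over adjacent pairs. -/
noncomputable def kappaLLYedge [Fintype V] (G : SimpleGraph V) : ℝ :=
  sInf {k : ℝ | ∃ x y : V, G.Adj x y ∧ k = kappaLLY G x y}

/-- The vertex connectivity `k(G)`. -/
noncomputable def vertexConnectivity [Fintype V] (G : SimpleGraph V) : ℕ :=
  sInf {n : ℕ | ∃ S : Finset V, S.card = n ∧
    (¬ (G.induce ((S : Set V)ᶜ)).Connected ∨ ((S : Set V)ᶜ).Subsingleton)}

/-- The edge connectivity `k'(G)`. -/
noncomputable def edgeConnectivity [Fintype V] (G : SimpleGraph V) : ℕ :=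
  sInf {n : ℕ | ∃ F : Finset (Sym2 V), F.card = n ∧ (F : Set (Sym2 V)) ⊆ G.edgeSet ∧
    ¬ (G.deleteEdges (F : Set (Sym2 V))).Connected}

/-- Amply regular graph with parameters `(d, α, β)`. -/
def IsAmplyRegular [Fintype V] (G : SimpleGraph V) (d α β : ℕ) : Prop :=
  G.IsRegularOfDegree d ∧
  (∀ u v, G.Adj u v → (G.neighborFinset u ∩ G.neighborFinset v).card = α) ∧
  (∀ u v : V, G.dist u v = 2 → (G.neighborFinset u ∩ G.neighborFinset v).card = β)

/-- A matching given as a finite set of ordered pairs satisfying a constraint `P`. -/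
def IsPairMatching (P : V → V → Prop) (M : Finset (V × V)) : Prop :=
  (∀ e ∈ M, P e.1 e.2) ∧
  ∀ e ∈ M, ∀ f ∈ M, e ≠ f → e.1 ≠ f.1 ∧ e.1 ≠ f.2 ∧ e.2 ≠ f.1 ∧ e.2 ≠ f.2

/-! ### Connectivity, vertex boundaries and diameter -/

/-- The outer vertex boundary of `S` is a cut as soon as some vertex lies outside the closed
neighbourhood of `S`, so it has at least `k(G)` elements. -/
lemma vertexConnectivity_le_card_boundary [Fintype V] (G : SimpleGraph V) (S : Finset V)
    (hS : S.Nonempty) (y : V) (hyS : y ∉ S) (hy : ∀ u ∈ S, ¬ G.Adj u y) :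
    vertexConnectivity G ≤ #{v | v ∉ S ∧ ∃ u ∈ S, G.Adj u v} := by
  set D : Finset V := {v | v ∉ S ∧ ∃ u ∈ S, G.Adj u v} with hD
  apply Nat.sInf_le
  refine ⟨D, rfl, Or.inl fun hc => ?_⟩
  obtain ⟨u, hu⟩ := hS
  have huD : u ∈ ((D : Set V)ᶜ) := by simp [hD, hu]
  have hyD : y ∈ ((D : Set V)ᶜ) := by
    simp only [hD, Set.mem_compl_iff, mem_coe, mem_filter, mem_univ, true_and, not_and]
    rintro - ⟨w, hw, hwy⟩
    exact hy w hw hwy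
  obtain ⟨w⟩ := hc.preconnected ⟨u, huD⟩ ⟨y, hyD⟩
  have key : ∀ (a b : ((D : Set V)ᶜ : Set V)), (G.induce ((D : Set V)ᶜ)).Walk a b →
      a.1 ∈ S → b.1 ∈ S := by
    intro a b w
    induction w with
    | nil => exact id
    | @cons a b c h w ih =>
      intro ha
      apply ih
      by_contra hb
      apply b.2
      simp only [hD, mem_coe, mem_filter, mem_univ, true_and]
      exact ⟨hb, a.1, ha, h⟩
  exact hyS (key _ _ w hu)

lemma vertexConnectivity_le_degree [Fintype V] (G : SimpleGraph V) (x : V) :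
    vertexConnectivity G ≤ G.degree x := by
  by_cases h : ∃ y, y ≠ x ∧ ¬ G.Adj x y
  · obtain ⟨y, hyx, hy⟩ := h
    refine (vertexConnectivity_le_card_boundary G {x} (by simp) y (by simpa using hyx)
      (by simpa using hy)).trans ?_
    rw [← G.card_neighborFinset_eq_degree]
    apply card_le_card
    intro v hv
    simp only [mem_filter, mem_univ, true_and, mem_singleton, exists_eq_left] at hv
    simpa using hv.2
  · push Not at h
    rw [← G.card_neighborFinset_eq_degree]
    apply Nat.sInf_le
    refine ⟨G.neighborFinset x, rfl, Or.inr ?_⟩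
    have hx : ∀ u ∈ ((G.neighborFinset x : Set V)ᶜ), u = x := by
      intro u hu
      by_contra hux
      exact hu (by simpa using h u hux)
    intro u hu v hv
    rw [hx u hu, hx v hv]

/-- If `k(G) ≥ (n - 1) / 2`, two non-adjacent vertices have a common neighbour, because all
degrees are at least `k(G)`. -/
lemma dist_le_two [Fintype V] (G : SimpleGraph V)
    (hk : Fintype.card V ≤ 2 * vertexConnectivity G + 1) (u v : V) : G.dist u v ≤ 2 := by
  by_cases huv : u = v
  · simp [huv]
  by_cases hadj : G.Adj u v
  · rw [SimpleGraph.dist_eq_one_iff_adj.mpr hadj]; norm_num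
  have h1 := vertexConnectivity_le_degree G u
  have h2 := vertexConnectivity_le_degree G v
  rw [← G.card_neighborFinset_eq_degree] at h1 h2
  have h3 := card_union_add_card_inter (G.neighborFinset u) (G.neighborFinset v)
  have h4 : #(G.neighborFinset u ∪ G.neighborFinset v) + 2 ≤ Fintype.card V := by
    rw [← card_pair huv, ← card_union_of_disjoint]
    · exact card_le_univ _
    · rw [disjoint_left]
      intro w hw
      simp only [mem_union, SimpleGraph.mem_neighborFinset, mem_insert, mem_singleton] at hw ⊢
      rintro (rfl | rfl)
      · rcases hw with hw | hw
        · exact G.loopless.irrefl _ hw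
        · exact hadj hw.symm
      · rcases hw with hw | hw
        · exact hadj hw
        · exact G.loopless.irrefl _ hw
  have h5 : 0 < #(G.neighborFinset u ∩ G.neighborFinset v) := by omega
  obtain ⟨w, hw⟩ := card_pos.mp h5
  simp only [mem_inter, SimpleGraph.mem_neighborFinset] at hw
  exact SimpleGraph.dist_le
    (SimpleGraph.Walk.cons hw.1 (SimpleGraph.Walk.cons hw.2.symm SimpleGraph.Walk.nil))

/-! ### Matchings from connectivity -/

/-- Hall's theorem with deficiency `δ`, obtained by adjoining `δ` dummy elements that are
admissible for everyone. -/
lemma exists_partial_matching [Fintype V] (r : V → V → Prop) (A B : Finset V) (δ : ℕ)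
    (h : ∀ S ⊆ A, #S ≤ #{v ∈ B | ∃ u ∈ S, r u v} + δ) :
    ∃ A' ⊆ A, ∃ g : V → V, Set.InjOn g A' ∧ (∀ u ∈ A', g u ∈ B ∧ r u (g u)) ∧
      #A ≤ #A' + δ := by
  let t : A → Finset (V ⊕ Fin δ) := fun u => ({v ∈ B | r u v} : Finset V).disjSum univ
  have hall : ∀ S : Finset A, #S ≤ #(S.biUnion t) := by
    intro S
    by_cases hS : S.Nonempty
    · have h1 := h (S.map (Function.Embedding.subtype _)) (by
        intro u hu
        simp only [Finset.mem_map, Function.Embedding.coe_subtype] at hu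
        obtain ⟨w, -, rfl⟩ := hu
        exact w.2)
      rw [card_map] at h1
      refine h1.trans ?_
      have h2 : #({v ∈ B | ∃ u ∈ S.map (Function.Embedding.subtype _), r u v}) + δ =
          #(({v ∈ B | ∃ u ∈ S.map (Function.Embedding.subtype _), r u v} : Finset V).disjSum
            (univ : Finset (Fin δ))) := by
        rw [card_disjSum, card_univ, Fintype.card_fin]
      rw [h2]
      apply card_le_card
      intro w hw
      rw [mem_biUnion]
      rcases w with v | i
      · simp only [inl_mem_disjSum, mem_filter, Finset.mem_map] at hw
        obtain ⟨hvB, u, ⟨u', hu', rfl⟩, hr⟩ := hw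
        refine ⟨u', hu', ?_⟩
        simp only [t, inl_mem_disjSum, mem_filter]
        exact ⟨hvB, hr⟩
      · obtain ⟨u, hu⟩ := hS
        exact ⟨u, hu, by simp [t]⟩
    · rw [not_nonempty_iff_eq_empty.mp hS]; simp
  obtain ⟨f, hf, hft⟩ := (Finset.all_card_le_biUnion_card_iff_exists_injective t).mp hall
  -- `g` follows the matching where it does not use a dummy element.
  let g : V → V := fun u => if hu : u ∈ A then Sum.elim id (fun _ => u) (f ⟨u, hu⟩) else u
  let A' : Finset V := {u ∈ A | ∃ hu : u ∈ A, (f ⟨u, hu⟩).isLeft}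
  have hg : ∀ u ∈ A', ∃ hu : u ∈ A, f ⟨u, hu⟩ = Sum.inl (g u) := by
    intro u hu
    simp only [A', mem_filter] at hu
    obtain ⟨-, huA, hl⟩ := hu
    refine ⟨huA, ?_⟩
    obtain ⟨v, hv⟩ := Sum.isLeft_iff.mp hl
    simp [g, huA, hv]
  refine ⟨A', filter_subset _ _, g, ?_, ?_, ?_⟩
  · intro u hu v hv huv
    obtain ⟨hu1, hu2⟩ := hg u hu
    obtain ⟨hv1, hv2⟩ := hg v hv
    have := hf (hu2.trans ((congrArg Sum.inl huv).trans hv2.symm))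
    simpa using this
  · intro u hu
    obtain ⟨hu1, hu2⟩ := hg u hu
    have := hft ⟨u, hu1⟩
    rw [hu2] at this
    simpa [t] using this
  · have h1 : #(A \ A') ≤ δ := by
      have h2 : ∀ u ∈ A \ A', ∃ i : ℕ, ∃ hi : i < δ, ∃ hu : u ∈ A,
          f ⟨u, hu⟩ = Sum.inr ⟨i, hi⟩ := by
        intro u hu
        simp only [A', Finset.mem_sdiff, mem_filter, not_and] at hu
        have h3 := hu.2 hu.1
        rcases hfu : f ⟨u, hu.1⟩ with v | i
        · exact absurd ⟨hu.1, by simp [hfu]⟩ h3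
        · exact ⟨i, i.2, hu.1, hfu⟩
      choose! j hj using h2
      have h4 : #(A \ A') ≤ #(range δ) := by
        apply card_le_card_of_injOn j (fun u hu => by simpa using (hj u hu).1)
        intro u hu v hv huv
        obtain ⟨hu0, hu1, hu2⟩ := hj u hu
        obtain ⟨hv0, hv1, hv2⟩ := hj v hv
        have := hf (hu2.trans ((congrArg Sum.inr (Fin.ext huv)).trans hv2.symm))
        simpa using this
      simpa using h4
    have h5 := card_sdiff_add_card A A'
    have h6 : A ∪ A' = A := union_eq_left.mpr (filter_subset _ _)
    rw [h6] at h5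
    omega

/-- A set `A` outside the closed neighbourhood of `y` admits a large matching along edges of `G`
into any disjoint set `B` avoiding `y`: the boundary of a nonempty `S ⊆ A` separates `S` from `y`,
hence has at least `k(G)` elements, and at most `n - |S| - |B| - 1` of them miss `B`. -/
lemma exists_matching_private_neighbors [Fintype V] (G : SimpleGraph V) (y : V)
    (A B : Finset V) (hA : ∀ u ∈ A, u ≠ y ∧ ¬ G.Adj y u) (hAB : Disjoint A B) (hyB : y ∉ B)
    (hB : vertexConnectivity G + 1 + #B ≤ Fintype.card V) :
    ∃ A' ⊆ A, ∃ g : V → V, Set.InjOn g A' ∧ (∀ u ∈ A', g u ∈ B ∧ G.Adj u (g u)) ∧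
      #A + vertexConnectivity G + 1 + #B ≤ #A' + Fintype.card V := by
  obtain ⟨A', hA', g, hg, hgB, hc⟩ := exists_partial_matching G.Adj A B
    (Fintype.card V - (vertexConnectivity G + 1 + #B)) (by
    intro S hS
    by_cases hne : S.Nonempty
    · have hyS : y ∉ S := fun h => (hA y (hS h)).1 rfl
      have h1 := vertexConnectivity_le_card_boundary G S hne y hyS
        (fun u hu h => (hA u (hS hu)).2 h.symm)
      have hSB : Disjoint S B := disjoint_of_subset_left hS hAB
      have h2 : #({v | v ∉ S ∧ ∃ u ∈ S, G.Adj u v} : Finset V) ≤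
          #(({v ∈ B | ∃ u ∈ S, G.Adj u v} : Finset V) ∪ (insert y (S ∪ B))ᶜ) := by
        apply card_le_card
        intro v hv
        simp only [mem_filter, mem_univ, true_and] at hv
        simp only [mem_union, mem_filter, mem_compl, mem_insert, not_or]
        by_cases hvB : v ∈ B
        · exact Or.inl ⟨hvB, hv.2⟩
        · refine Or.inr ⟨?_, hv.1, hvB⟩
          rintro rfl
          obtain ⟨u, hu, huv⟩ := hv.2
          exact (hA u (hS hu)).2 huv.symm
      have h3 := card_union_le ({v ∈ B | ∃ u ∈ S, G.Adj u v} : Finset V) (insert y (S ∪ B))ᶜ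
      have h4 : #(insert y (S ∪ B)) = #S + #B + 1 := by
        rw [card_insert_of_notMem (by simp [hyS, hyB]), card_union_of_disjoint hSB]
      have h5 := card_add_card_compl (insert y (S ∪ B))
      omega
    · rw [not_nonempty_iff_eq_empty.mp hne]; simp)
  exact ⟨A', hA', g, hg, hgB, by omega⟩

/-! ### Transport plans -/

lemma planCost_nonneg [Fintype V] (G : SimpleGraph V) {μ ν : V → ℝ} {π : V → V → ℝ}
    (h : IsTransportPlan μ ν π) : 0 ≤ planCost G π :=
  sum_nonneg fun u _ => sum_nonneg fun v _ => mul_nonneg (Nat.cast_nonneg _) (h.1 u v).1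

lemma Wdist_le_planCost [Fintype V] (G : SimpleGraph V) {μ ν : V → ℝ} {π : V → V → ℝ}
    (h : IsTransportPlan μ ν π) : Wdist G μ ν ≤ planCost G π := by
  refine csInf_le ⟨0, ?_⟩ ⟨π, h, rfl⟩
  rintro c ⟨π, hπ, rfl⟩
  exact planCost_nonneg G hπ

/-- A partial transport plan `σ` is completed by the normalized product of the two residual
measures. -/
lemma exists_completion [Fintype V] {μ ν : V → ℝ} (σ : V → V → ℝ)
    (hσ : ∀ u v, 0 ≤ σ u v) (hrow : ∀ u, ∑ v, σ u v ≤ μ u) (hcol : ∀ v, ∑ u, σ u v ≤ ν v)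
    (hμ : ∑ u, μ u = 1) (hν : ∑ v, ν v = 1) :
    ∃ π, IsTransportPlan μ ν π ∧ ∀ u v, σ u v ≤ π u v := by
  set m : ℝ := 1 - ∑ u, ∑ v, σ u v with hm
  set α : V → ℝ := fun u => μ u - ∑ v, σ u v with hα
  set β : V → ℝ := fun v => ν v - ∑ u, σ u v with hβ
  have hα0 : ∀ u, 0 ≤ α u := fun u => sub_nonneg.mpr (hrow u)
  have hβ0 : ∀ v, 0 ≤ β v := fun v => sub_nonneg.mpr (hcol v)
  have hαm : ∑ u, α u = m := by simp only [hα, sum_sub_distrib, hμ, hm]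
  have hβm : ∑ v, β v = m := by
    simp only [hβ, sum_sub_distrib, hν, hm]
    rw [sum_comm]
  have hm0 : 0 ≤ m := hαm ▸ sum_nonneg fun u _ => hα0 u
  have hμ0 : ∀ u, 0 ≤ μ u := fun u => (sum_nonneg fun v _ => hσ u v).trans (hrow u)
  have hμ1 : ∀ u, μ u ≤ 1 := fun u => hμ ▸ single_le_sum (fun v _ => hμ0 v) (mem_univ u)
  -- When `m = 0` both residuals vanish, so the junk value of division by `0` is harmless.
  have hα' : ∀ u, α u * m / m = α u := by
    intro u
    rcases hm0.eq_or_lt with h | h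
    · have : α u ≤ m := hαm ▸ single_le_sum (fun v _ => hα0 v) (mem_univ u)
      rw [← h] at this
      simp [le_antisymm this (hα0 u)]
    · field_simp
  have hβ' : ∀ v, m * β v / m = β v := by
    intro v
    rcases hm0.eq_or_lt with h | h
    · have : β v ≤ m := hβm ▸ single_le_sum (fun v _ => hβ0 v) (mem_univ v)
      rw [← h] at this
      simp [le_antisymm this (hβ0 v)]
    · field_simp
  have hres : ∀ u v, 0 ≤ α u * β v / m := fun u v =>
    div_nonneg (mul_nonneg (hα0 u) (hβ0 v)) hm0
  have hπ0 : ∀ u v, 0 ≤ σ u v + α u * β v / m := fun u v => add_nonneg (hσ u v) (hres u v)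
  have hπrow : ∀ u, ∑ v, (σ u v + α u * β v / m) = μ u := by
    intro u
    rw [sum_add_distrib, ← sum_div, ← mul_sum, hβm, hα']
    simp [hα]
  refine ⟨fun u v => σ u v + α u * β v / m, ⟨fun u v => ⟨hπ0 u v, ?_⟩, hπrow, fun v => ?_⟩,
    fun u v => le_add_of_nonneg_right (hres u v)⟩
  · exact ((single_le_sum (fun w _ => hπ0 u w) (mem_univ v)).trans (hπrow u).le).trans (hμ1 u)
  · rw [sum_add_distrib, ← sum_div, ← sum_mul, hαm, hβ']
    simp [hβ]

/-- In diameter at most two, every unit of mass costs at most `2`, and a partial plan records the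
mass that is transported more cheaply. -/
lemma Wdist_le_of_partial_plan [Fintype V] (G : SimpleGraph V) (hd : ∀ u v, G.dist u v ≤ 2)
    {μ ν : V → ℝ} (σ : V → V → ℝ)
    (hσ : ∀ u v, 0 ≤ σ u v) (hrow : ∀ u, ∑ v, σ u v ≤ μ u) (hcol : ∀ v, ∑ u, σ u v ≤ ν v)
    (hμ : ∑ u, μ u = 1) (hν : ∑ v, ν v = 1) :
    Wdist G μ ν ≤ 2 - ∑ u, ∑ v, (2 - (G.dist u v : ℝ)) * σ u v := by
  obtain ⟨π, hπ, hσπ⟩ := exists_completion σ hσ hrow hcol hμ hν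
  refine (Wdist_le_planCost G hπ).trans ?_
  have h1 : ∑ u, ∑ v, (2 - (G.dist u v : ℝ)) * σ u v ≤
      ∑ u, ∑ v, (2 - (G.dist u v : ℝ)) * π u v :=
    sum_le_sum fun u _ => sum_le_sum fun v _ => mul_le_mul_of_nonneg_left (hσπ u v)
      (sub_nonneg.mpr (by exact_mod_cast hd u v))
  have h2 : ∑ u, ∑ v, (2 - (G.dist u v : ℝ)) * π u v = 2 - planCost G π := by
    simp only [sub_mul, sum_sub_distrib, ← mul_sum, hπ.2.1, hμ, planCost, mul_one]
  linarith

/-! ### The measures `μ_x^p` and existence of the curvature limit -/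

lemma muP_nonneg [Fintype V] (G : SimpleGraph V) {p : ℝ} (h0 : 0 ≤ p) (h1 : p ≤ 1) (x z : V) :
    0 ≤ muP G p x z := by
  unfold muP
  split_ifs
  · exact h0
  · exact div_nonneg (by linarith) (Nat.cast_nonneg _)
  · exact le_rfl

lemma sum_muP [Fintype V] (G : SimpleGraph V) (p : ℝ) (x : V) (hx : 0 < G.degree x) :
    ∑ z, muP G p x z = 1 := by
  have h : ∀ z, muP G p x z =
      (if z = x then p else 0) + if G.Adj x z then (1 - p) / (G.degree x) else 0 := by
    intro z
    by_cases hz : z = x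
    · subst hz; simp [muP]
    · simp [muP, hz]
  have hx' : (G.degree x : ℝ) ≠ 0 := by exact_mod_cast hx.ne'
  simp only [h, sum_add_distrib, sum_ite_eq', mem_univ, if_true]
  rw [← sum_filter, sum_const, ← G.neighborFinset_eq_filter, G.card_neighborFinset_eq_degree,
    nsmul_eq_mul]
  field_simp
  ring

/-- The curvature quotient is monotone in the idleness `p`: since
`μ_x^q = λ μ_x^p + (1 - λ) δ_x` with `λ = (1 - q) / (1 - p)`, plans for `p` mix with the plan
carrying `δ_x` to `δ_y`. -/
lemma monotoneOn_curvature [Fintype V] (G : SimpleGraph V) {x y : V} (hxy : G.Adj x y) :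
    MonotoneOn (fun p => (1 - Wdist G (muP G p x) (muP G p y)) / (1 - p))
      (Set.Ioo (0 : ℝ) 1) := by
  intro p hp q hq hpq
  have hdx : 0 < G.degree x := (G.degree_pos_iff_exists_adj x).mpr ⟨y, hxy⟩
  have hdy : 0 < G.degree y := (G.degree_pos_iff_exists_adj y).mpr ⟨x, hxy.symm⟩
  have hp1 : 0 < 1 - p := by linarith [hp.2]
  have hq1 : 0 < 1 - q := by linarith [hq.2]
  set l : ℝ := (1 - q) / (1 - p) with hl
  have hl0 : 0 < l := div_pos hq1 hp1
  have hl1 : l ≤ 1 := by rw [hl, div_le_one hp1]; linarith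
  have hlp : l * (1 - p) = 1 - q := by rw [hl]; field_simp
  have hmix : ∀ w z, muP G q w z = l * muP G p w z + (1 - l) * if z = w then 1 else 0 := by
    intro w z
    unfold muP
    split_ifs
    · linarith
    · rw [← hlp]; ring
    · ring
  have key : ∀ c, (∃ π, IsTransportPlan (muP G p x) (muP G p y) π ∧ c = planCost G π) →
      (Wdist G (muP G q x) (muP G q y) - (1 - l)) / l ≤ c := by
    rintro c ⟨π, hπ, rfl⟩
    have hplan : IsTransportPlan (muP G q x) (muP G q y)
        (fun u v => l * π u v + (1 - l) * if u = x ∧ v = y then 1 else 0) := by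
      refine ⟨fun u v => ⟨?_, ?_⟩, fun u => ?_, fun v => ?_⟩
      · have := mul_nonneg hl0.le (hπ.1 u v).1
        dsimp only
        split_ifs <;> linarith
      · have := mul_le_mul_of_nonneg_left (hπ.1 u v).2 hl0.le
        dsimp only
        split_ifs <;> linarith
      · rw [sum_add_distrib, ← mul_sum, ← mul_sum, hπ.2.1, hmix]
        by_cases hu : u = x <;> simp [hu]
      · rw [sum_add_distrib, ← mul_sum, ← mul_sum, hπ.2.2, hmix]
        by_cases hv : v = y <;> simp [hv]
    have h1 := Wdist_le_planCost G hplan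
    have h2 : planCost G (fun u v => l * π u v + (1 - l) * if u = x ∧ v = y then 1 else 0) =
        l * planCost G π + (1 - l) := by
      simp only [planCost, mul_add, sum_add_distrib]
      congr 1
      · simp only [mul_sum]
        exact sum_congr rfl fun u _ => sum_congr rfl fun v _ => by ring
      · rw [sum_eq_single x, sum_eq_single y]
        · simp [SimpleGraph.dist_eq_one_iff_adj.mpr hxy]
        · intro v _ hv; simp [hv]
        · simp
        · intro u _ hu; simp [hu]
        · simp
    rw [div_le_iff₀ hl0]
    linarith
  obtain ⟨π, hπ, -⟩ := exists_completion (μ := muP G p x) (ν := muP G p y) (fun _ _ => 0)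
    (fun _ _ => le_rfl) (fun u => by simpa using muP_nonneg G hp.1.le hp.2.le x u)
    (fun u => by simpa using muP_nonneg G hp.1.le hp.2.le y u) (sum_muP G p x hdx)
    (sum_muP G p y hdy)
  have h3 : (Wdist G (muP G q x) (muP G q y) - (1 - l)) / l ≤
      Wdist G (muP G p x) (muP G p y) := le_csInf ⟨_, π, hπ, rfl⟩ key
  rw [div_le_iff₀ hl0] at h3
  show _ / _ ≤ _ / _
  rw [div_le_div_iff₀ hp1 hq1, ← hlp]
  nlinarith

/-- At least `p - (1 - p)` units of mass have to leave `x`, which bounds the curvature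
quotient by `2`. -/
lemma curvature_le_two [Fintype V] (G : SimpleGraph V) (hconn : G.Connected) {x y : V}
    (hxy : G.Adj x y) {p : ℝ} (hp : p ∈ Set.Ioo (0 : ℝ) 1) :
    (1 - Wdist G (muP G p x) (muP G p y)) / (1 - p) ≤ 2 := by
  have hdx : 0 < G.degree x := (G.degree_pos_iff_exists_adj x).mpr ⟨y, hxy⟩
  have hdy : 0 < G.degree y := (G.degree_pos_iff_exists_adj y).mpr ⟨x, hxy.symm⟩
  have hp1 : 0 < 1 - p := by linarith [hp.2]
  obtain ⟨π, hπ, -⟩ := exists_completion (μ := muP G p x) (ν := muP G p y) (fun _ _ => 0)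
    (fun _ _ => le_rfl) (fun u => by simpa using muP_nonneg G hp.1.le hp.2.le x u)
    (fun u => by simpa using muP_nonneg G hp.1.le hp.2.le y u) (sum_muP G p x hdx)
    (sum_muP G p y hdy)
  have h : p - (1 - p) ≤ Wdist G (muP G p x) (muP G p y) := by
    refine le_csInf ⟨_, π, hπ, rfl⟩ ?_
    rintro c ⟨π, hπ, rfl⟩
    have h1 : ∑ v, (G.dist x v : ℝ) * π x v ≤ planCost G π :=
      single_le_sum (f := fun u => ∑ v, (G.dist u v : ℝ) * π u v)
        (fun u _ => sum_nonneg fun v _ => mul_nonneg (Nat.cast_nonneg _) (hπ.1 u v).1)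
        (mem_univ x)
    have h2 : ∑ v, (π x v - if v = x then π x v else 0) ≤ ∑ v, (G.dist x v : ℝ) * π x v := by
      refine sum_le_sum fun v _ => ?_
      by_cases hv : v = x
      · simp [hv]
      · have : (1 : ℝ) ≤ G.dist x v := by
          exact_mod_cast hconn.pos_dist_of_ne (Ne.symm hv)
        have h0 := (hπ.1 x v).1
        simp only [hv, if_false]
        nlinarith
    rw [sum_sub_distrib, hπ.2.1, sum_ite_eq'] at h2
    have h3 : π x x ≤ muP G p y x := by
      rw [← hπ.2.2 x]
      exact single_le_sum (f := fun u => π u x) (fun u _ => (hπ.1 u x).1) (mem_univ x)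
    have h4 : muP G p y x ≤ 1 - p := by
      have h5 : (1 : ℝ) ≤ G.degree y := by exact_mod_cast hdy
      simp only [muP, hxy.ne, if_false, hxy.symm, if_true]
      exact div_le_self hp1.le h5
    have h5 : muP G p x x = p := by simp [muP]
    simp only [mem_univ, if_true] at h2
    linarith
  rw [div_le_iff₀ hp1]
  linarith

/-- The limit defining the Lin-Lu-Yau curvature of an edge exists. -/
lemma tendsto_kappaLLY [Fintype V] (G : SimpleGraph V) (hconn : G.Connected) {x y : V}
    (hxy : G.Adj x y) :
    Tendsto (fun p => (1 - Wdist G (muP G p x) (muP G p y)) / (1 - p))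
      (nhdsWithin 1 (Set.Iio (1 : ℝ))) (nhds (kappaLLY G x y)) := by
  have h := (monotoneOn_curvature G hxy).tendsto_nhdsWithin_Ioo_left ⟨1 / 2, by norm_num⟩ (by
    refine ⟨2, ?_⟩
    rintro _ ⟨p, hp, rfl⟩
    exact curvature_le_two G hconn hxy hp)
  have h1 : kappaLLY G x y = sSup ((fun p => (1 - Wdist G (muP G p x) (muP G p y)) / (1 - p)) ''
      Set.Ioo (0 : ℝ) 1) := by
    unfold kappaLLY
    rw [SimpleGraph.dist_eq_one_iff_adj.mpr hxy]
    simp only [Nat.cast_one, div_one]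
    exact h.limUnder_eq
  rw [h1]
  exact h

/-! ### The curvature bound -/

/-- The transport bound given by a matching `g` from `A'`, a set of neighbours of `x` that are
not in the closed neighbourhood of `y`, to neighbours of `y` outside that of `x`. The plan keeps
the mass common to both measures in place, moves `x` to `y`, follows the matching, and completes
arbitrarily. -/
lemma Wdist_muP_le [Fintype V] (G : SimpleGraph V) (hd : ∀ u v, G.dist u v ≤ 2) {x y : V}
    (hxy : G.Adj x y) (hdeg : G.degree y ≤ G.degree x) (A' : Finset V) (g : V → V)
    (hA' : ∀ u ∈ A', G.Adj x u ∧ u ≠ y ∧ ¬ G.Adj y u) (hg : Set.InjOn g A')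
    (hgB : ∀ u ∈ A', G.Adj y (g u) ∧ g u ≠ x ∧ ¬ G.Adj x (g u) ∧ G.Adj u (g u))
    {p : ℝ} (hp : p ∈ Set.Ioo (1 / 2 : ℝ) 1) :
    Wdist G (muP G p x) (muP G p y) ≤ 1 + (1 - p) - (1 - p) / G.degree x *
      (3 + 2 * #(G.neighborFinset x ∩ G.neighborFinset y) + #A') := by
  have hdx : 0 < G.degree x := (G.degree_pos_iff_exists_adj x).mpr ⟨y, hxy⟩
  have hdy : 0 < G.degree y := (G.degree_pos_iff_exists_adj y).mpr ⟨x, hxy.symm⟩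
  have hp1 : 0 < 1 - p := by linarith [hp.2]
  have hp2 := hp.1
  set s : ℝ := (1 - p) / G.degree x with hs
  set t : ℝ := (1 - p) / G.degree y with ht
  have hdy1 : (1 : ℝ) ≤ G.degree y := by exact_mod_cast hdy
  have hs0 : 0 ≤ s := div_nonneg hp1.le (Nat.cast_nonneg _)
  have hst : s ≤ t := div_le_div_of_nonneg_left hp1.le (by linarith) (by exact_mod_cast hdeg)
  have htp : t ≤ p := (div_le_self hp1.le hdy1).trans (by linarith)
  set C := G.neighborFinset x ∩ G.neighborFinset y with hC
  have hne : x ≠ y := hxy.ne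
  have hmx : ∀ z, muP G p x z = if z = x then p else if G.Adj x z then s else 0 := fun z => rfl
  have hmy : ∀ z, muP G p y z = if z = y then p else if G.Adj y z then t else 0 := fun z => rfl
  let diag : V → ℝ := fun u =>
    (if u = x then t else 0) + (if u = y then s else 0) + if u ∈ C then s else 0
  let σ : V → V → ℝ := fun u v =>
    (if v = u then diag u else 0) + (if u = x ∧ v = y then p - t else 0) +
      if u ∈ A' ∧ v = g u then s else 0
  have hdiag : ∀ u, 0 ≤ diag u := by
    intro u
    simp only [diag]
    split_ifs <;> linarith
  have hσ : ∀ u v, 0 ≤ σ u v := by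
    intro u v
    have := hdiag u
    simp only [σ]
    split_ifs <;> linarith
  have hxA : x ∉ A' := fun h => G.loopless.irrefl _ (hA' x h).1
  have hyA : y ∉ A' := fun h => (hA' y h).2.1 rfl
  have hxC : x ∉ C := by simp [hC]
  have hyC : y ∉ C := by simp [hC]
  have hCA : ∀ u ∈ C, u ∉ A' := by
    intro u hu h
    simp only [hC, mem_inter, SimpleGraph.mem_neighborFinset] at hu
    exact (hA' u h).2.2 hu.2
  have hrow : ∀ u, ∑ v, σ u v ≤ muP G p x u := by
    intro u
    have h1 : ∑ v, σ u v = diag u + (if u = x then p - t else 0) + if u ∈ A' then s else 0 := by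
      simp only [σ, sum_add_distrib, sum_ite_eq', mem_univ, if_true, ite_and]
      congr 2
      · split_ifs <;> simp
      · split_ifs <;> simp
    rw [h1, hmx]
    simp only [diag]
    by_cases hux : u = x
    · subst hux; simp [hne, hxA, hxC]
    by_cases huy : u = y
    · subst huy; simp [hux, hyA, hyC, hxy]
    by_cases huC : u ∈ C
    · have huA := hCA u huC
      have : G.Adj x u := by simp [hC] at huC; exact huC.1
      simp [hux, huy, huC, huA, this]
    by_cases huA : u ∈ A'
    · simp [hux, huy, huC, huA, (hA' u huA).1]
    · simp only [hux, huy, huC, huA, if_false, add_zero]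
      split_ifs <;> linarith
  have hcol : ∀ v, ∑ u, σ u v ≤ muP G p y v := by
    intro v
    have h1 : ∑ u, σ u v = diag v + (if v = y then p - t else 0) +
        ∑ u, if u ∈ A' ∧ v = g u then s else 0 := by
      simp only [σ, sum_add_distrib, sum_ite_eq, mem_univ, if_true]
      congr 2
      by_cases hv : v = y <;> simp [hv]
    have h2 : ∑ u, (if u ∈ A' ∧ v = g u then s else 0) ≤
        if G.Adj y v ∧ v ≠ x ∧ ¬ G.Adj x v then s else 0 := by
      by_cases hv : ∃ u ∈ A', v = g u
      · obtain ⟨u, hu, rfl⟩ := hv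
        have h3 := hgB u hu
        rw [if_pos ⟨h3.1, h3.2.1, h3.2.2.1⟩, sum_eq_single u]
        · simp [hu]
        · intro w _ hw
          rw [if_neg]
          rintro ⟨hwA, h⟩
          exact hw (hg hwA hu h.symm)
        · simp
      · push Not at hv
        rw [sum_eq_zero]
        · split_ifs <;> linarith
        · intro u _
          rw [if_neg]
          rintro ⟨hu, h⟩
          exact hv u hu h
    rw [h1, hmy]
    refine (add_le_add_right h2 _).trans ?_
    simp only [diag]
    by_cases hvy : v = y
    · subst hvy; simp [hne.symm, hyC]; linarith
    by_cases hvx : v = x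
    · subst hvx; simp [hvy, hxC, hxy.symm]
    by_cases hvC : v ∈ C
    · have : G.Adj x v ∧ G.Adj y v := by simpa [hC] using hvC
      simp [hvx, hvy, hvC, this]; linarith
    · by_cases hyv : G.Adj y v
      · simp only [hvx, hvy, hvC, hyv, if_false, add_zero, zero_add, if_true]
        split_ifs <;> linarith
      · simp [hvx, hvy, hvC, hyv]
  have hW := Wdist_le_of_partial_plan G hd σ hσ hrow hcol (sum_muP G p x hdx) (sum_muP G p y hdy)
  have hsum : ∑ u, ∑ v, (2 - (G.dist u v : ℝ)) * σ u v =
      2 * (t + s + #C * s) + (p - t) + #A' * s := by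
    have h1 : ∀ u, ∑ v, (2 - (G.dist u v : ℝ)) * σ u v =
        2 * diag u + (if u = x then p - t else 0) + if u ∈ A' then s else 0 := by
      intro u
      simp only [σ, mul_add, sum_add_distrib, mul_ite, mul_zero, sum_ite_eq', mem_univ, if_true,
        SimpleGraph.dist_self, Nat.cast_zero, sub_zero, ite_and]
      congr 2
      · by_cases hu : u = x
        · subst hu
          simp [SimpleGraph.dist_eq_one_iff_adj.mpr hxy]
          ring
        · simp [hu]
      · by_cases hu : u ∈ A'
        · simp [hu, SimpleGraph.dist_eq_one_iff_adj.mpr (hgB u hu).2.2.2]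
          ring
        · simp [hu]
    simp only [h1, diag, sum_add_distrib, ← mul_sum, sum_ite_eq', mem_univ, if_true, sum_ite_mem,
      univ_inter, sum_const, nsmul_eq_mul]
  rw [hsum] at hW
  linarith

/-- If `k(G) ≥ (n−1)/2`, then for any two adjacent vertices `x, y` with
`d_x ≥ d_y` we have `κ_LLY(x,y) ≥ (2k(G) − n + 2)/d_x`. -/
theorem kappaLLY_ge_of_large_connectivity
    {V : Type*} [Fintype V] (G : SimpleGraph V) (hconn : G.Connected)
    (hk : ((Fintype.card V : ℝ) - 1) / 2 ≤ (vertexConnectivity G : ℝ)) :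
    ∀ x y : V, G.Adj x y → G.degree y ≤ G.degree x →
      (2 * (vertexConnectivity G : ℝ) - (Fintype.card V : ℝ) + 2) / (G.degree x : ℝ) ≤
        kappaLLY G x y := by
  intro x y hxy hdeg
  have hdx : 0 < G.degree x := (G.degree_pos_iff_exists_adj x).mpr ⟨y, hxy⟩
  have hdx' : (0 : ℝ) < G.degree x := by exact_mod_cast hdx
  have hk' : Fintype.card V ≤ 2 * vertexConnectivity G + 1 := by
    have : (Fintype.card V : ℝ) ≤ 2 * vertexConnectivity G + 1 := by linarith
    exact_mod_cast this
  set C := G.neighborFinset x ∩ G.neighborFinset y with hC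
  set A := (G.neighborFinset x \ G.neighborFinset y).erase y with hA
  set B := (G.neighborFinset y \ G.neighborFinset x).erase x with hB
  have hAc : #A + #C + 1 = G.degree x := by
    have h1 := card_sdiff_add_card_inter (G.neighborFinset x) (G.neighborFinset y)
    have h2 : #A + 1 = #(G.neighborFinset x \ G.neighborFinset y) :=
      card_erase_add_one (by simp [hxy])
    rw [← hC] at h1
    rw [← G.card_neighborFinset_eq_degree]
    omega
  have hBc : #B + #C + 1 = G.degree y := by
    have h1 := card_sdiff_add_card_inter (G.neighborFinset y) (G.neighborFinset x)
    have h2 : #B + 1 = #(G.neighborFinset y \ G.neighborFinset x) :=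
      card_erase_add_one (by simp [hxy.symm])
    rw [inter_comm, ← hC] at h1
    rw [← G.card_neighborFinset_eq_degree]
    omega
  have hmemA : ∀ u ∈ A, G.Adj x u ∧ u ≠ y ∧ ¬ G.Adj y u := by
    intro u hu
    simp only [hA, mem_erase, Finset.mem_sdiff, SimpleGraph.mem_neighborFinset] at hu
    exact ⟨hu.2.1, hu.1, hu.2.2⟩
  have hmemB : ∀ u ∈ B, G.Adj y u ∧ u ≠ x ∧ ¬ G.Adj x u := by
    intro u hu
    simp only [hB, mem_erase, Finset.mem_sdiff, SimpleGraph.mem_neighborFinset] at hu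
    exact ⟨hu.2.1, hu.1, hu.2.2⟩
  have hAB : Disjoint A B :=
    disjoint_left.mpr fun u hu hu' => (hmemB u hu').2.2 (hmemA u hu).1
  have hyB : y ∉ B := fun h => G.loopless.irrefl _ (hmemB y h).1
  have hkx := vertexConnectivity_le_degree G x
  have hky := vertexConnectivity_le_degree G y
  have hcard : G.degree x + 1 + #B ≤ Fintype.card V := by
    have h1 : #(insert x (G.neighborFinset x) ∪ B) = G.degree x + 1 + #B := by
      rw [card_union_of_disjoint, card_insert_of_notMem (by simp),
        G.card_neighborFinset_eq_degree]
      rw [disjoint_right]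
      intro u hu
      simp only [mem_insert, SimpleGraph.mem_neighborFinset, not_or]
      exact (hmemB u hu).2
    rw [← h1]
    exact card_le_univ _
  obtain ⟨A', hA', g, hg, hgB, hm⟩ := exists_matching_private_neighbors G y A B
    (fun u hu => (hmemA u hu).2) hAB hyB (by omega)
  refine ge_of_tendsto (tendsto_kappaLLY G hconn hxy) ?_
  filter_upwards [Ioo_mem_nhdsLT (show (1 / 2 : ℝ) < 1 by norm_num)] with p hp
  have hp1 : 0 < 1 - p := by linarith [hp.2]
  have hW := Wdist_muP_le G (dist_le_two G hk') hxy hdeg A' g (fun u hu => hmemA u (hA' hu)) hg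
    (fun u hu => ⟨(hmemB _ (hgB u hu).1).1, (hmemB _ (hgB u hu).1).2.1,
      (hmemB _ (hgB u hu).1).2.2, (hgB u hu).2⟩) hp
  have hnat : 2 * vertexConnectivity G + 2 + G.degree x ≤
      3 + 2 * #C + #A' + Fintype.card V := by omega
  have hreal : 2 * (vertexConnectivity G : ℝ) - Fintype.card V + 2 ≤
      3 + 2 * #C + #A' - G.degree x := by
    have : (2 * vertexConnectivity G + 2 + G.degree x : ℝ) ≤
      3 + 2 * #C + #A' + Fintype.card V := by exact_mod_cast hnat
    linarith
  calc (2 * (vertexConnectivity G : ℝ) - Fintype.card V + 2) / G.degree x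
      ≤ (3 + 2 * #C + #A' - G.degree x) / G.degree x := by gcongr
    _ = ((1 - p) / G.degree x * (3 + 2 * #C + #A') - (1 - p)) / (1 - p) := by
        field_simp
    _ ≤ _ := div_le_div_of_nonneg_right (by rw [← hC] at hW; linarith) hp1.le
end

section
/- Let n and k be positive integers such that n − k is odd and (n+1)/3 ≤ k ≤ n − 1. Then there exists a finite connected simple graph G on n vertices with connectivity k such that there are two adjacent vertices x and y with d_x = d_y = k satisfying κ_LLY(x,y) = (2k − n + 2)/k. -/
/-!
Write `n = 2 + Δ + 3 m` and `k = Δ + m + 1`; the parity and size hypotheses on `n, k` say exactly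
that such `m, Δ ≥ 0` exist. Blow up the 5-cycle `x - y - B - D - A - x` by keeping `x, y` single and
replacing `A, B, D` by cliques of size `m` (consecutive parts completely joined), and add a clique
`C` of `Δ` vertices joined to everything. For `m = 0` this is the complete graph.

*Connectivity.* Removing the `k` neighbours of `x` isolates `x` (`vertexConnectivity_le_degree`).
Conversely, a separating set contains `C` and two non-consecutive parts of the 5-cycle, and two such
parts have together at least `m + 1` vertices (`exists_outside`, `short_path`).

*Curvature.* With `q = (1 - p) / k`, the measure `μ_x^p` is `q` on the closed neighbourhood of `x`
plus an additional mass `p - q` at `x`. Moving this additional mass to `y` and matching `A` with `B`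
at distance 2 costs `p - q + 2 m q`. The 1-Lipschitz function that is `2` on `A`, `0` on `B ∪ {y}`
and `1` elsewhere shows by Kantorovich duality that this is optimal (`Wdist_eq`), so that the
curvature is `(k + 1 - 2 m) / k` (`kappaLLY_eq`), and `2 m = n - k - 1`.
-/

open Filter Finset

attribute [local instance] Classical.propDecidable

variable {V : Type*}

/-! ### Curvature from a matching and a Lipschitz potential -/

/-- The closed neighbourhood of `x`. -/
noncomputable def closedNbhd [Fintype V] (G : SimpleGraph V) (x : V) : Finset V :=
  univ.filter fun u => u = x ∨ G.Adj x u

lemma muP_eq [Fintype V] (G : SimpleGraph V) (p : ℝ) (x u : V) :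
    muP G p x u = (p - (1 - p) / G.degree x) * (if u = x then 1 else 0) +
      (1 - p) / G.degree x * (if u ∈ closedNbhd G x then 1 else 0) := by
  by_cases h : u = x
  · subst h; simp [muP, closedNbhd]
  · by_cases h2 : G.Adj x u <;> simp [muP, closedNbhd, h, h2]

lemma sum_mul_muP [Fintype V] (G : SimpleGraph V) (p : ℝ) (x : V) (f : V → ℝ) :
    ∑ u, f u * muP G p x u = (p - (1 - p) / G.degree x) * f x +
      (1 - p) / G.degree x * ∑ u ∈ closedNbhd G x, f u := by
  have : ∀ u, f u * muP G p x u =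
      (if u = x then (p - (1 - p) / G.degree x) * f u else 0) +
      (1 - p) / G.degree x * (if u ∈ closedNbhd G x then f u else 0) := by
    intro u
    rw [muP_eq]
    split_ifs <;> ring
  rw [sum_congr rfl fun u _ => this u, sum_add_distrib, ← mul_sum]
  simp

/-- A function which drops by at most one along every edge is 1-Lipschitz. -/
lemma sub_le_dist (G : SimpleGraph V) (hG : G.Connected) (f : V → ℝ)
    (hf : ∀ u v, G.Adj u v → f u - f v ≤ 1) (u v : V) : f u - f v ≤ G.dist u v := by
  have key : ∀ {a b : V} (w : G.Walk a b), f a - f b ≤ w.length := by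
    intro a b w
    induction w with
    | nil => simp
    | cons h w ih =>
      have := hf _ _ h
      rw [SimpleGraph.Walk.length_cons]
      push_cast
      linarith
  obtain ⟨w, hw⟩ := (hG u v).exists_walk_length_eq_dist
  rw [← hw]
  exact key w

/-- The weak half of Kantorovich duality. -/
lemma le_planCost [Fintype V] (G : SimpleGraph V) (hG : G.Connected) (f : V → ℝ)
    (hf : ∀ u v, G.Adj u v → f u - f v ≤ 1) {μ₁ μ₂ : V → ℝ} {π : V → V → ℝ}
    (hπ : IsTransportPlan μ₁ μ₂ π) :
    ∑ u, f u * μ₁ u - ∑ u, f u * μ₂ u ≤ planCost G π := by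
  obtain ⟨h0, h1, h2⟩ := hπ
  have e1 : ∑ u, f u * μ₁ u = ∑ u, ∑ v, f u * π u v := by
    refine sum_congr rfl fun u _ => ?_
    rw [← h1 u, mul_sum]
  have e2 : ∑ v, f v * μ₂ v = ∑ u, ∑ v, f v * π u v := by
    rw [sum_comm]
    refine sum_congr rfl fun v _ => ?_
    rw [← h2 v, mul_sum]
  rw [e1, e2, ← sum_sub_distrib]
  refine sum_le_sum fun u _ => ?_
  rw [← sum_sub_distrib]
  refine sum_le_sum fun v _ => ?_
  rw [← sub_mul]
  exact mul_le_mul_of_nonneg_right (sub_le_dist G hG f hf u v) (h0 u v).1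

/-- The Wasserstein distance between `μ_x^p` and `μ_y^p` for adjacent vertices of equal degree `k`
and `p ≥ 1 / (k + 1)`, certified by a permutation `τ` carrying one closed neighbourhood to the other
and a 1-Lipschitz potential `f` along which `τ` is tight. -/
lemma Wdist_eq [Fintype V] (G : SimpleGraph V) (hG : G.Connected) (x y : V) (hxy : G.Adj x y)
    (k : ℕ) (hk : 0 < k) (hx : G.degree x = k) (hy : G.degree y = k) (τ : V ≃ V)
    (hτ : ∀ u, τ u ∈ closedNbhd G y ↔ u ∈ closedNbhd G x) (f : V → ℝ)
    (hf : ∀ u v, G.Adj u v → f u - f v ≤ 1) (hfxy : f x - f y = 1)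
    (hd : ∀ u ∈ closedNbhd G x, (G.dist u (τ u) : ℝ) ≤ f u - f (τ u))
    (p : ℝ) (hp1 : p < 1) (hp : (1 - p) / k ≤ p) :
    Wdist G (muP G p x) (muP G p y) =
      (p - (1 - p) / k) + (1 - p) / k * ∑ u ∈ closedNbhd G x, (f u - f (τ u)) := by
  have hk1 : (1 : ℝ) ≤ k := by exact_mod_cast hk
  have hq0 : 0 ≤ (1 - p) / k := div_nonneg (by linarith) (by linarith)
  have hsum : ∑ u ∈ closedNbhd G x, f (τ u) = ∑ v ∈ closedNbhd G y, f v :=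
    sum_equiv τ (fun u => (hτ u).symm) fun _ _ => rfl
  have mx := fun u => muP_eq G p x u
  have my := fun u => muP_eq G p y u
  rw [hx] at mx
  rw [hy] at my
  have hlow : ∀ π, IsTransportPlan (muP G p x) (muP G p y) π →
      (p - (1 - p) / k) + (1 - p) / k * ∑ u ∈ closedNbhd G x, (f u - f (τ u)) ≤ planCost G π := by
    intro π hπ
    refine le_trans (le_of_eq ?_) (le_planCost G hG f hf hπ)
    rw [sum_mul_muP, sum_mul_muP, hx, hy, sum_sub_distrib, hsum]
    linear_combination (-(p - (1 - p) / (k : ℝ))) * hfxy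
  set q := (1 - p) / (k : ℝ) with hq
  let π : V → V → ℝ := fun u v => (if v = y then (if u = x then p - q else 0) else 0) +
    (if v = τ u then (if u ∈ closedNbhd G x then q else 0) else 0)
  have hrow : ∀ u, ∑ v, π u v = muP G p x u := by
    intro u
    rw [mx u]
    simp [π, sum_add_distrib]
  have hnn : ∀ u v, 0 ≤ π u v := by
    intro u v
    have : 0 ≤ p - q := by linarith
    simp only [π]
    split_ifs <;> linarith
  have hplan : IsTransportPlan (muP G p x) (muP G p y) π := by
    refine ⟨fun u v => ⟨hnn u v, ?_⟩, hrow, fun v => ?_⟩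
    · refine (single_le_sum (f := π u) (fun w _ => hnn u w) (mem_univ v)).trans ?_
      rw [hrow u]
      have : q ≤ 1 := by linarith
      simp only [muP, hx]
      split_ifs <;> linarith
    · rw [my v, sum_add_distrib]
      congr 1
      · by_cases h : v = y <;> simp [h]
      · have : ∀ u, (v = τ u) ↔ (u = τ.symm v) := fun u => by
          rw [Equiv.eq_symm_apply, eq_comm]
        simp only [this]
        have h2 := hτ (τ.symm v)
        rw [Equiv.apply_symm_apply] at h2
        simp [h2]
  have hcost : planCost G π ≤ (p - q) + q * ∑ u ∈ closedNbhd G x, (f u - f (τ u)) := by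
    have e : planCost G π = (p - q) + q * ∑ u ∈ closedNbhd G x, (G.dist u (τ u) : ℝ) := by
      simp only [planCost, π, mul_add, sum_add_distrib]
      congr 1
      · simp [SimpleGraph.dist_eq_one_iff_adj.2 hxy]
      · simp [mul_sum, mul_comm]
    rw [e]
    have := mul_le_mul_of_nonneg_left (sum_le_sum hd) hq0
    linarith
  refine le_antisymm ?_ ?_
  · refine le_trans (csInf_le ?_ ⟨π, hplan, rfl⟩) hcost
    refine ⟨(p - q) + q * ∑ u ∈ closedNbhd G x, (f u - f (τ u)), ?_⟩
    rintro c ⟨π', h', rfl⟩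
    exact hlow π' h'
  · refine le_csInf ⟨_, π, hplan, rfl⟩ ?_
    rintro c ⟨π', h', rfl⟩
    exact hlow π' h'

lemma kappaLLY_eq [Fintype V] (G : SimpleGraph V) (hG : G.Connected) (x y : V) (hxy : G.Adj x y)
    (k : ℕ) (hk : 0 < k) (hx : G.degree x = k) (hy : G.degree y = k) (τ : V ≃ V)
    (hτ : ∀ u, τ u ∈ closedNbhd G y ↔ u ∈ closedNbhd G x) (f : V → ℝ)
    (hf : ∀ u v, G.Adj u v → f u - f v ≤ 1) (hfxy : f x - f y = 1)
    (hd : ∀ u ∈ closedNbhd G x, (G.dist u (τ u) : ℝ) ≤ f u - f (τ u)) :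
    kappaLLY G x y = (k + 1 - ∑ u ∈ closedNbhd G x, (f u - f (τ u))) / k := by
  have hk1 : (1 : ℝ) ≤ k := by exact_mod_cast hk
  refine Tendsto.limUnder_eq (tendsto_const_nhds.congr' ?_)
  have h1 : ∀ᶠ p : ℝ in nhdsWithin 1 (Set.Iio (1 : ℝ)), (1 : ℝ) / 2 < p :=
    mem_nhdsWithin_of_mem_nhds (lt_mem_nhds (by norm_num))
  filter_upwards [h1, self_mem_nhdsWithin] with p hp hp1
  have hp1 : p < 1 := hp1
  have h2 : (1 - p) / k ≤ p := by
    rw [div_le_iff₀ (by linarith)]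
    nlinarith
  rw [Wdist_eq G hG x y hxy k hk hx hy τ hτ f hf hfxy hd p hp1 h2,
    SimpleGraph.dist_eq_one_iff_adj.2 hxy]
  have : (1 - p) ≠ 0 := by linarith
  have : (k : ℝ) ≠ 0 := by linarith
  field_simp
  push_cast
  ring

/-! ### The blown-up 5-cycle -/

/-- The part containing vertex `i`: the parts `0 = {x}`, `1 = {y}`, `2 = B`, `3 = D`, `4 = A` are
numbered along the 5-cycle, and `5 = C` is the part joined to everything. -/
def part (m i : ℕ) : ℕ :=
  if i = 0 then 0 else if i = 1 then 1 else if i < 2 + m then 4 else if i < 2 + 2 * m then 2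
  else if i < 2 + 3 * m then 3 else 5

lemma part_spec (m i : ℕ) :
    (i = 0 ∧ part m i = 0) ∨ (i = 1 ∧ part m i = 1) ∨ (2 ≤ i ∧ i < 2 + m ∧ part m i = 4) ∨
    (2 + m ≤ i ∧ i < 2 + 2 * m ∧ part m i = 2) ∨
    (2 + 2 * m ≤ i ∧ i < 2 + 3 * m ∧ part m i = 3) ∨ (2 + 3 * m ≤ i ∧ 2 ≤ i ∧ part m i = 5) := by
  unfold part
  split_ifs <;> omega

/-- Two parts are far when they are not consecutive on the 5-cycle. -/
def Far (a b : ℕ) : Prop :=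
  a < 5 ∧ b < 5 ∧ (a + 2 = b ∨ a + 3 = b ∨ b + 2 = a ∨ b + 3 = a)

lemma far_symm {a b : ℕ} (h : Far a b) : Far b a := by
  unfold Far at *
  omega

lemma far_cases {a b : ℕ} (h : Far a b) :
    (a = 0 ∧ b = 2) ∨ (a = 0 ∧ b = 3) ∨ (a = 1 ∧ b = 3) ∨ (a = 1 ∧ b = 4) ∨ (a = 2 ∧ b = 4) ∨
    (a = 2 ∧ b = 0) ∨ (a = 3 ∧ b = 0) ∨ (a = 3 ∧ b = 1) ∨ (a = 4 ∧ b = 1) ∨ (a = 4 ∧ b = 2) := by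
  obtain ⟨ha, hb, h⟩ := h
  interval_cases a <;> interval_cases b <;> simp_all

/-- The blow-up of the 5-cycle together with the universal clique. -/
def blowup (n m : ℕ) : SimpleGraph (Fin n) where
  Adj i j := i ≠ j ∧ ¬ Far (part m i) (part m j)
  symm := ⟨fun _ _ h => ⟨h.1.symm, fun h' => h.2 (far_symm h')⟩⟩
  loopless := ⟨fun _ h => h.1 rfl⟩

lemma card_fin_Ico (n a b : ℕ) (hb : b ≤ n) :
    ((univ : Finset (Fin n)).filter fun i => a ≤ i.val ∧ i.val < b).card = b - a := by
  rw [← Nat.card_Ico a b, ← card_map Fin.valEmbedding]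
  congr 1
  ext j
  simp only [Finset.mem_map, mem_filter, mem_univ, true_and, Fin.valEmbedding_apply, mem_Ico]
  constructor
  · rintro ⟨i, h, rfl⟩
    exact h
  · intro h
    exact ⟨⟨j, by omega⟩, h, rfl⟩

/-- Fewer than `k = Δ + m + 1` vertices cannot cover `C` together with two far parts. -/
lemma exists_outside (m Δ : ℕ) (hm : 0 < m) (S : Finset (Fin (2 + Δ + 3 * m)))
    (hS : S.card < Δ + m + 1) (s t : ℕ) (hst : Far s t) :
    ∃ i, i ∉ S ∧ (part m i = s ∨ part m i = t ∨ part m i = 5) := by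
  by_contra! hcon
  let I : ℕ → ℕ → Finset (Fin (2 + Δ + 3 * m)) := fun a b =>
    univ.filter fun i => a ≤ i.val ∧ i.val < b
  -- It suffices to cover three disjoint intervals of vertices with enough elements.
  have key : ∀ a b c d, b ≤ c → c ≤ d → d ≤ 2 + 3 * m → m + 1 ≤ (b - a) + (d - c) →
      (∀ i : Fin (2 + Δ + 3 * m), (a ≤ i.val ∧ i.val < b) ∨ (c ≤ i.val ∧ i.val < d) →
        part m i = s ∨ part m i = t) → False := by
    intro a b c d hbc hcd hd hcard hcol
    have hsub : I a b ∪ I c d ∪ I (2 + 3 * m) (2 + Δ + 3 * m) ⊆ S := by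
      intro i hi
      by_contra hiS
      have hc := hcon i hiS
      simp only [I, mem_union, mem_filter, mem_univ, true_and] at hi
      rcases hi with hi | hi
      · rcases hcol i hi with h | h
        · exact hc.1 h
        · exact hc.2.1 h
      · have := part_spec m i
        exact hc.2.2 (by omega)
    have h1 : Disjoint (I a b) (I c d) := by
      rw [Finset.disjoint_left]
      intro i h h'
      simp only [I, mem_filter, mem_univ, true_and] at h h'
      omega
    have h2 : Disjoint (I a b ∪ I c d) (I (2 + 3 * m) (2 + Δ + 3 * m)) := by
      rw [Finset.disjoint_left]
      intro i h h'
      simp only [I, mem_union, mem_filter, mem_univ, true_and] at h h'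
      omega
    have h3 := card_le_card hsub
    rw [card_union_of_disjoint h2, card_union_of_disjoint h1] at h3
    simp only [I] at h3
    rw [card_fin_Ico _ _ _ (by omega), card_fin_Ico _ _ _ (by omega),
      card_fin_Ico _ _ _ (by omega)] at h3
    omega
  rcases far_cases hst with ⟨rfl, rfl⟩ | ⟨rfl, rfl⟩ | ⟨rfl, rfl⟩ | ⟨rfl, rfl⟩ | ⟨rfl, rfl⟩ |
    ⟨rfl, rfl⟩ | ⟨rfl, rfl⟩ | ⟨rfl, rfl⟩ | ⟨rfl, rfl⟩ | ⟨rfl, rfl⟩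
  · exact key 0 1 (2 + m) (2 + 2 * m) (by omega) (by omega) (by omega)
      (by omega) (by intro i hi; have := part_spec m i; omega)
  · exact key 0 1 (2 + 2 * m) (2 + 3 * m) (by omega) (by omega) (by omega)
      (by omega) (by intro i hi; have := part_spec m i; omega)
  · exact key 1 2 (2 + 2 * m) (2 + 3 * m) (by omega) (by omega) (by omega)
      (by omega) (by intro i hi; have := part_spec m i; omega)
  · exact key 1 2 2 (2 + m) (by omega) (by omega) (by omega)
      (by omega) (by intro i hi; have := part_spec m i; omega)
  · exact key 2 (2 + m) (2 + m) (2 + 2 * m) (by omega) (by omega) (by omega)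
      (by omega) (by intro i hi; have := part_spec m i; omega)
  · exact key 0 1 (2 + m) (2 + 2 * m) (by omega) (by omega) (by omega)
      (by omega) (by intro i hi; have := part_spec m i; omega)
  · exact key 0 1 (2 + 2 * m) (2 + 3 * m) (by omega) (by omega) (by omega)
      (by omega) (by intro i hi; have := part_spec m i; omega)
  · exact key 1 2 (2 + 2 * m) (2 + 3 * m) (by omega) (by omega) (by omega)
      (by omega) (by intro i hi; have := part_spec m i; omega)
  · exact key 1 2 2 (2 + m) (by omega) (by omega) (by omega)
      (by omega) (by intro i hi; have := part_spec m i; omega)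
  · exact key 2 (2 + m) (2 + m) (2 + 2 * m) (by omega) (by omega) (by omega)
      (by omega) (by intro i hi; have := part_spec m i; omega)

/-- Vertices in far parts are joined outside a small set `S` by a path through the part between them
or through `C`, or else by a path of length three around the other side of the 5-cycle. -/
lemma short_path (m Δ : ℕ) (S : Finset (Fin (2 + Δ + 3 * m)))
    (hS : S.card < Δ + m + 1) (u v : Fin (2 + Δ + 3 * m))
    (huv : Far (part m u) (part m v)) :
    (∃ w, w ∉ S ∧ (blowup _ m).Adj u w ∧ (blowup _ m).Adj w v) ∨
    (∃ w w', w ∉ S ∧ w' ∉ S ∧ (blowup _ m).Adj u w ∧ (blowup _ m).Adj w w' ∧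
      (blowup _ m).Adj w' v) := by
  have hm : 0 < m := by
    by_contra h0
    have : m = 0 := by omega
    subst this
    have h1 := part_spec 0 u
    have h2 := part_spec 0 v
    unfold Far at huv
    omega
  have adj : ∀ i j : Fin (2 + Δ + 3 * m), part m i ≠ part m j →
      ¬ Far (part m i) (part m j) → (blowup _ m).Adj i j :=
    fun i j h h' => ⟨fun e => h (by rw [e]), h'⟩
  -- `c` is the part between `u` and `v`, while `l, l'` are the two parts on the other side.
  have key : ∀ c l l', Far c l → Far c l' → l ≠ l' → ¬ Far l l' →
      (part m u ≠ c ∧ ¬ Far (part m u) c) → (c ≠ part m v ∧ ¬ Far c (part m v)) →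
      (part m u ≠ l ∧ ¬ Far (part m u) l) → (l' ≠ part m v ∧ ¬ Far l' (part m v)) →
      (∃ w, w ∉ S ∧ (blowup _ m).Adj u w ∧ (blowup _ m).Adj w v) ∨
      (∃ w w', w ∉ S ∧ w' ∉ S ∧ (blowup _ m).Adj u w ∧ (blowup _ m).Adj w w' ∧
        (blowup _ m).Adj w' v) := by
    intro c l l' hcl hcl' hll hll' huc hcv hul hlv
    have mid : ∀ w, w ∉ S → part m w = c ∨ part m w = 5 →
        (blowup _ m).Adj u w ∧ (blowup _ m).Adj w v := by
      rintro w - (h | h)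
      · exact ⟨adj _ _ (by rw [h]; exact huc.1) (by rw [h]; exact huc.2),
          adj _ _ (by rw [h]; exact hcv.1) (by rw [h]; exact hcv.2)⟩
      · have h5 := huv
        unfold Far at h5
        refine ⟨adj _ _ ?_ ?_, adj _ _ ?_ ?_⟩ <;> rw [h] <;> (try unfold Far) <;> omega
    obtain ⟨w, hw, h⟩ := exists_outside m Δ hm S hS c l hcl
    obtain ⟨w', hw', h'⟩ := exists_outside m Δ hm S hS c l' hcl'
    rcases h with h | h | h
    · exact Or.inl ⟨w, hw, mid w hw (Or.inl h)⟩
    · rcases h' with h' | h' | h'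
      · exact Or.inl ⟨w', hw', mid w' hw' (Or.inl h')⟩
      · refine Or.inr ⟨w, w', hw, hw', adj _ _ ?_ ?_, adj _ _ ?_ ?_, adj _ _ ?_ ?_⟩
        · rw [h]; exact hul.1
        · rw [h]; exact hul.2
        · rw [h, h']; exact hll
        · rw [h, h']; exact hll'
        · rw [h']; exact hlv.1
        · rw [h']; exact hlv.2
      · exact Or.inl ⟨w', hw', mid w' hw' (Or.inr h')⟩
    · exact Or.inl ⟨w, hw, mid w hw (Or.inr h)⟩
  rcases far_cases huv with ⟨h, h'⟩ | ⟨h, h'⟩ | ⟨h, h'⟩ | ⟨h, h'⟩ | ⟨h, h'⟩ |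
    ⟨h, h'⟩ | ⟨h, h'⟩ | ⟨h, h'⟩ | ⟨h, h'⟩ | ⟨h, h'⟩ <;> rw [h, h'] at key
  · exact key 1 4 3 (by simp [Far]) (by simp [Far]) (by simp) (by simp [Far]) (by simp [Far])
      (by simp [Far]) (by simp [Far]) (by simp [Far])
  · exact key 4 1 2 (by simp [Far]) (by simp [Far]) (by simp) (by simp [Far]) (by simp [Far])
      (by simp [Far]) (by simp [Far]) (by simp [Far])
  · exact key 2 0 4 (by simp [Far]) (by simp [Far]) (by simp) (by simp [Far]) (by simp [Far])
      (by simp [Far]) (by simp [Far]) (by simp [Far])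
  · exact key 0 2 3 (by simp [Far]) (by simp [Far]) (by simp) (by simp [Far]) (by simp [Far])
      (by simp [Far]) (by simp [Far]) (by simp [Far])
  · exact key 3 1 0 (by simp [Far]) (by simp [Far]) (by simp) (by simp [Far]) (by simp [Far])
      (by simp [Far]) (by simp [Far]) (by simp [Far])
  · exact key 1 3 4 (by simp [Far]) (by simp [Far]) (by simp) (by simp [Far]) (by simp [Far])
      (by simp [Far]) (by simp [Far]) (by simp [Far])
  · exact key 4 2 1 (by simp [Far]) (by simp [Far]) (by simp) (by simp [Far]) (by simp [Far])
      (by simp [Far]) (by simp [Far]) (by simp [Far])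
  · exact key 2 4 0 (by simp [Far]) (by simp [Far]) (by simp) (by simp [Far]) (by simp [Far])
      (by simp [Far]) (by simp [Far]) (by simp [Far])
  · exact key 0 3 2 (by simp [Far]) (by simp [Far]) (by simp) (by simp [Far]) (by simp [Far])
      (by simp [Far]) (by simp [Far]) (by simp [Far])
  · exact key 3 0 1 (by simp [Far]) (by simp [Far]) (by simp) (by simp [Far]) (by simp [Far])
      (by simp [Far]) (by simp [Far]) (by simp [Far])

lemma induce_preconnected (m Δ : ℕ) (S : Finset (Fin (2 + Δ + 3 * m)))
    (hS : S.card < Δ + m + 1) :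
    ((blowup (2 + Δ + 3 * m) m).induce ((S : Set (Fin (2 + Δ + 3 * m)))ᶜ)).Preconnected := by
  rintro ⟨u, hu⟩ ⟨v, hv⟩
  have step : ∀ {a b} (ha : a ∈ ((S : Set (Fin (2 + Δ + 3 * m)))ᶜ)) (hb : b ∈ ((S : Set _)ᶜ)),
      (blowup (2 + Δ + 3 * m) m).Adj a b →
      ((blowup (2 + Δ + 3 * m) m).induce ((S : Set _)ᶜ)).Reachable ⟨a, ha⟩ ⟨b, hb⟩ := by
    intro a b ha hb h
    exact SimpleGraph.Adj.reachable h
  by_cases huv : u = v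
  · subst huv; exact SimpleGraph.Reachable.refl _
  by_cases hfar : Far (part m u) (part m v)
  · rcases short_path m Δ S hS u v hfar with ⟨w, hw, h1, h2⟩ | ⟨w, w', hw, hw', h1, h2, h3⟩
    · exact (step hu (by simpa using hw) h1).trans (step _ hv h2)
    · exact ((step hu (by simpa using hw) h1).trans (step _ (by simpa using hw') h2)).trans
        (step _ hv h3)
  · exact step hu hv ⟨huv, hfar⟩

lemma blowup_connected (m Δ : ℕ) : (blowup (2 + Δ + 3 * m) m).Connected := by
  have : Nonempty (Fin (2 + Δ + 3 * m)) := ⟨⟨0, by omega⟩⟩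
  refine ⟨fun u v => ?_⟩
  have h := induce_preconnected m Δ ∅ (by simp) ⟨u, by simp⟩ ⟨v, by simp⟩
  exact h.map (SimpleGraph.Embedding.induce _).toHom

lemma le_vertexConnectivity_blowup (m Δ : ℕ) :
    Δ + m + 1 ≤ vertexConnectivity (blowup (2 + Δ + 3 * m) m) := by
  refine le_csInf ⟨_, univ, rfl, Or.inr (by simp)⟩ ?_
  rintro s ⟨S, rfl, hS⟩
  by_contra! hlt
  have hcard : 1 < (Sᶜ).card := by
    rw [card_compl, Fintype.card_fin]
    omega
  obtain ⟨a, ha, b, hb, hab⟩ := one_lt_card.1 hcard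
  have ha' : a ∈ ((S : Set (Fin (2 + Δ + 3 * m)))ᶜ) := by simpa using ha
  have hb' : b ∈ ((S : Set (Fin (2 + Δ + 3 * m)))ᶜ) := by simpa using hb
  rcases hS with hS | hS
  · have : Nonempty ((S : Set (Fin (2 + Δ + 3 * m)))ᶜ : Set _) := ⟨⟨a, ha'⟩⟩
    exact hS ⟨induce_preconnected m Δ S hlt⟩
  · exact hab (hS ha' hb')

/-! ### The distinguished edge -/

/-- The involution exchanging the parts `A` and `B`, on vertex numbers. -/
def swapNat (m i : ℕ) : ℕ :=
  if 2 ≤ i ∧ i < 2 + m then i + m else if 2 + m ≤ i ∧ i < 2 + 2 * m then i - m else i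

lemma swapNat_spec (m i : ℕ) :
    (2 ≤ i ∧ i < 2 + m ∧ swapNat m i = i + m) ∨
    (2 + m ≤ i ∧ i < 2 + 2 * m ∧ swapNat m i + m = i) ∨
    ((i < 2 ∨ 2 + 2 * m ≤ i) ∧ swapNat m i = i) := by
  unfold swapNat
  split_ifs <;> omega

/-- The involution exchanging the parts `A` and `B`. -/
def swapAB (m Δ : ℕ) : Fin (2 + Δ + 3 * m) ≃ Fin (2 + Δ + 3 * m) :=
  Function.Involutive.toPerm
    (fun i => ⟨swapNat m i, by have := swapNat_spec m i; omega⟩)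
    (by
      intro i
      apply Fin.ext
      have h1 := swapNat_spec m i
      have h2 := swapNat_spec m (swapNat m i)
      change swapNat m (swapNat m i) = i
      omega)

lemma swapAB_val (m Δ : ℕ) (i : Fin (2 + Δ + 3 * m)) : (swapAB m Δ i).val = swapNat m i :=
  rfl

lemma mem_closedNbhd_zero (m Δ : ℕ) (i : Fin (2 + Δ + 3 * m)) :
    i ∈ closedNbhd (blowup (2 + Δ + 3 * m) m) ⟨0, by omega⟩ ↔
      i.val < 2 + m ∨ 2 + 3 * m ≤ i.val := by
  have h0 : part m 0 = 0 := by simp [part]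
  have h := part_spec m i
  simp only [closedNbhd, mem_filter, mem_univ, true_and, blowup, ne_eq, Fin.ext_iff, Far, h0]
  omega

lemma mem_closedNbhd_one (m Δ : ℕ) (i : Fin (2 + Δ + 3 * m)) :
    i ∈ closedNbhd (blowup (2 + Δ + 3 * m) m) ⟨1, by omega⟩ ↔
      i.val < 2 ∨ (2 + m ≤ i.val ∧ i.val < 2 + 2 * m) ∨ 2 + 3 * m ≤ i.val := by
  have h0 : part m 1 = 1 := by simp [part]
  have h := part_spec m i
  simp only [closedNbhd, mem_filter, mem_univ, true_and, blowup, ne_eq, Fin.ext_iff, Far, h0]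
  omega

lemma swapAB_mem (m Δ : ℕ) (i : Fin (2 + Δ + 3 * m)) :
    swapAB m Δ i ∈ closedNbhd (blowup (2 + Δ + 3 * m) m) ⟨1, by omega⟩ ↔
      i ∈ closedNbhd (blowup (2 + Δ + 3 * m) m) ⟨0, by omega⟩ := by
  rw [mem_closedNbhd_zero, mem_closedNbhd_one, swapAB_val]
  have := swapNat_spec m i
  omega

lemma degree_add_one [Fintype V] (G : SimpleGraph V) (x : V) :
    G.degree x + 1 = (closedNbhd G x).card := by
  have : closedNbhd G x = insert x (G.neighborFinset x) := by
    ext u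
    simp [closedNbhd]
  rw [this, card_insert_of_notMem (by simp), SimpleGraph.card_neighborFinset_eq_degree]

lemma degree_zero (m Δ : ℕ) :
    (blowup (2 + Δ + 3 * m) m).degree ⟨0, by omega⟩ = Δ + m + 1 := by
  have h := degree_add_one (blowup (2 + Δ + 3 * m) m) ⟨0, by omega⟩
  have e : closedNbhd (blowup (2 + Δ + 3 * m) m) ⟨0, by omega⟩ =
      (univ.filter fun i : Fin (2 + Δ + 3 * m) => 0 ≤ i.val ∧ i.val < 2 + m) ∪
      (univ.filter fun i : Fin (2 + Δ + 3 * m) => 2 + 3 * m ≤ i.val ∧ i.val < 2 + Δ + 3 * m) := by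
    ext i
    rw [mem_closedNbhd_zero]
    simp
  rw [e, card_union_of_disjoint, card_fin_Ico _ _ _ (by omega), card_fin_Ico _ _ _ le_rfl] at h
  · omega
  · rw [Finset.disjoint_left]
    intro i h h'
    simp only [mem_filter, mem_univ, true_and] at h h'
    omega

lemma degree_one (m Δ : ℕ) :
    (blowup (2 + Δ + 3 * m) m).degree ⟨1, by omega⟩ = Δ + m + 1 := by
  have h := degree_add_one (blowup (2 + Δ + 3 * m) m) ⟨1, by omega⟩
  rw [← card_equiv (swapAB m Δ) fun i => (swapAB_mem m Δ i).symm, ← degree_add_one,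
    degree_zero] at h
  omega

/-- The potential certifying optimality: `2` on `A`, `0` on `B` and `y`, and `1` elsewhere. -/
noncomputable def potential (m i : ℕ) : ℝ :=
  if part m i = 4 then 2 else if part m i = 1 ∨ part m i = 2 then 0 else 1

lemma potential_lipschitz (n m : ℕ) (u v : Fin n) (h : (blowup n m).Adj u v) :
    potential m u - potential m v ≤ 1 := by
  have h2 := h.2
  unfold Far at h2
  unfold potential
  split_ifs <;> first | omega | norm_num

lemma potential_sub_swapAB (m Δ : ℕ) (u : Fin (2 + Δ + 3 * m))
    (hu : u ∈ closedNbhd (blowup (2 + Δ + 3 * m) m) ⟨0, by omega⟩) :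
    potential m u - potential m (swapAB m Δ u) =
      if 2 ≤ u.val ∧ u.val < 2 + m then 2 else 0 := by
  rw [mem_closedNbhd_zero] at hu
  by_cases h : 2 ≤ u.val ∧ u.val < 2 + m
  · have h1 : part m u = 4 := by have := part_spec m u; omega
    have h2 : part m (swapAB m Δ u) = 2 := by
      have := swapNat_spec m u
      have := part_spec m (swapAB m Δ u)
      rw [swapAB_val] at *
      omega
    simp [potential, h1, h2, h]
  · have h1 : (swapAB m Δ u).val = u.val := by
      have := swapNat_spec m u
      rw [swapAB_val]
      omega
    rw [h1, if_neg h, sub_self]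

/-- The matching of `A` with `B` has length 2, through `D`. -/
lemma dist_swapAB (m Δ : ℕ) (u : Fin (2 + Δ + 3 * m))
    (hu : u ∈ closedNbhd (blowup (2 + Δ + 3 * m) m) ⟨0, by omega⟩) :
    ((blowup (2 + Δ + 3 * m) m).dist u (swapAB m Δ u) : ℝ) ≤
      potential m u - potential m (swapAB m Δ u) := by
  rw [potential_sub_swapAB m Δ u hu]
  rw [mem_closedNbhd_zero] at hu
  split_ifs with h
  · have hv := swapNat_spec m u
    rw [← swapAB_val m Δ] at hv
    have h1 : part m u = 4 := by have := part_spec m u; omega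
    have h2 : part m (swapAB m Δ u) = 2 := by
      have := part_spec m (swapAB m Δ u)
      omega
    let w : Fin (2 + Δ + 3 * m) := ⟨u + 2 * m, by omega⟩
    have h3 : part m w = 3 := by
      have := part_spec m w
      have : w.val = u + 2 * m := rfl
      omega
    have a1 : (blowup (2 + Δ + 3 * m) m).Adj u w :=
      ⟨fun e => by rw [← e] at h3; omega, by rw [h1, h3]; simp [Far]⟩
    have a2 : (blowup (2 + Δ + 3 * m) m).Adj w (swapAB m Δ u) :=
      ⟨fun e => by rw [e] at h3; omega, by rw [h2, h3]; simp [Far]⟩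
    have := SimpleGraph.dist_le (SimpleGraph.Walk.cons a1 (SimpleGraph.Walk.cons a2 .nil))
    exact_mod_cast this
  · have h1 : swapAB m Δ u = u := by
      apply Fin.ext
      have := swapNat_spec m u
      rw [swapAB_val]
      omega
    simp [h1]

lemma sum_potential (m Δ : ℕ) :
    ∑ u ∈ closedNbhd (blowup (2 + Δ + 3 * m) m) ⟨0, by omega⟩,
      (potential m u - potential m (swapAB m Δ u)) = 2 * m := by
  rw [sum_congr rfl fun u hu => potential_sub_swapAB m Δ u hu, ← sum_filter]
  have e : (closedNbhd (blowup (2 + Δ + 3 * m) m) ⟨0, by omega⟩).filter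
      (fun u => 2 ≤ u.val ∧ u.val < 2 + m) =
      univ.filter fun i : Fin (2 + Δ + 3 * m) => 2 ≤ i.val ∧ i.val < 2 + m := by
    ext i
    rw [mem_filter, mem_closedNbhd_zero]
    simp only [mem_filter, mem_univ, true_and]
    omega
  rw [e, sum_const, card_fin_Ico _ _ _ (by omega)]
  simp [mul_comm]

/-- For positive integers `n, k` with `n − k` odd and `(n+1)/3 ≤ k ≤ n−1`,
there exists a connected graph on `n` vertices with connectivity `k` having two adjacent
vertices `x, y` of degree `k` with `κ_LLY(x,y) = (2k − n + 2)/k`. -/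
theorem exists_graph_with_extremal_curvature
    (n k : ℕ) (hn : 0 < n) (hk : 0 < k) (hodd : Odd (n - k))
    (hlow : n + 1 ≤ 3 * k) (hup : k ≤ n - 1) :
    ∃ G : SimpleGraph (Fin n), G.Connected ∧ vertexConnectivity G = k ∧
      ∃ x y : Fin n, G.Adj x y ∧ G.degree x = k ∧ G.degree y = k ∧
        kappaLLY G x y = (2 * (k : ℝ) - n + 2) / (k : ℝ) := by
  obtain ⟨m, hm⟩ := hodd
  obtain ⟨Δ, hΔ⟩ : ∃ Δ, k = Δ + m + 1 := ⟨k - m - 1, by omega⟩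
  obtain rfl : n = 2 + Δ + 3 * m := by omega
  have hadj : (blowup (2 + Δ + 3 * m) m).Adj ⟨0, by omega⟩ ⟨1, by omega⟩ :=
    ⟨by simp, by simp [part, Far]⟩
  subst hΔ
  refine ⟨blowup _ m, blowup_connected m Δ, le_antisymm ?_ (le_vertexConnectivity_blowup m Δ),
    ⟨0, by omega⟩, ⟨1, by omega⟩, hadj, ?_, ?_, ?_⟩
  · exact (vertexConnectivity_le_degree _ ⟨0, by omega⟩).trans (degree_zero m Δ).le
  · convert degree_zero m Δ
  · convert degree_one m Δ
  · rw [kappaLLY_eq _ (blowup_connected m Δ) _ _ hadj (Δ + m + 1) hk (degree_zero m Δ)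
      (degree_one m Δ) (swapAB m Δ) (swapAB_mem m Δ) (fun i => potential m i)
      (potential_lipschitz _ m) (by simp [potential, part]) (dist_swapAB m Δ), sum_potential]
    congr 1
    push_cast
    ring
end
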